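/- Given ε > 0, n ≥ 1, and s > 0, there exists c₀ > 0 depending only on ε, n, s such that for every 0 < c ≤ c₀ the following holds. Let Ω ⊆ ℝⁿ be a convex open set, x₀ ∈ Ω, and F ∈ F^s(Ω) with ‖F‖_{Ċ^s(Ω)} + ‖F‖_{Ḟ^s(Ω)} > 0. Set δ := c (F(x₀) / (‖F‖_{Ċ^s(Ω)} + ‖F‖_{Ḟ^s(Ω)}))^{1/s}. Then for all x ∈ Ω with |x − x₀| < δ and all 0 ≤ m < s, |∇^m F(x) − ∇^m F(x₀)| ≤ ε · (‖F‖_{Ċ^s(Ω)} + ‖F‖_{Ḟ^s(Ω)})^{m/s} · F(x₀)^{(s−m)/s}; in particular |F(x) − F(x₀)| ≤ ε F(x₀) for all such x. -/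

import Mathlib

open Set ENNReal
open scoped NNReal

noncomputable section

/-- The largest integer strictly less than `s` (for `s > 0`). -/
def lowFloor (s : ℝ) : ℕ := ⌈s⌉₊ - 1

variable {E : Type*} [NormedAddCommGroup E] [NormedSpace ℝ E]

/-- `max_{0 ≤ m < s} sup_{x ∈ Ω} |∇^m F(x)|`, valued in `ℝ≥0∞`. -/
def derivSup (s : ℝ) (Ω : Set E) (F : E → ℝ) : ℝ≥0∞ :=
  ⨆ (m : ℕ) (_ : m ≤ lowFloor s) (x : E) (_ : x ∈ Ω),
    (‖iteratedFDerivWithin ℝ m F Ω x‖₊ : ℝ≥0∞)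

/-- The homogeneous Hölder seminorm `‖F‖_{Ċ^s(Ω)}`, valued in `ℝ≥0∞`. -/
def holderSemi (s : ℝ) (Ω : Set E) (F : E → ℝ) : ℝ≥0∞ :=
  ⨆ (x : E) (_ : x ∈ Ω) (y : E) (_ : y ∈ Ω) (_ : x ≠ y),
    (‖iteratedFDerivWithin ℝ (lowFloor s) F Ω x
        - iteratedFDerivWithin ℝ (lowFloor s) F Ω y‖₊ : ℝ≥0∞)
      / ENNReal.ofReal (‖x - y‖ ^ (s - (lowFloor s : ℝ)))

/-- The Hölder norm `‖F‖_{C^s(Ω)}`, valued in `ℝ≥0∞`. -/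
def csNorm (s : ℝ) (Ω : Set E) (F : E → ℝ) : ℝ≥0∞ :=
  derivSup s Ω F + holderSemi s Ω F

/-- Membership in `C^s(Ω)`. -/
def MemCs (s : ℝ) (Ω : Set E) (F : E → ℝ) : Prop :=
  ContDiffOn ℝ (lowFloor s : ℕ∞) F Ω ∧ csNorm s Ω F ≠ ∞

/-- The flat seminorm `‖F‖_{Ḟ^s(Ω)}`, valued in `ℝ≥0∞`.  (In `ℝ≥0∞` one has
`0/0 = 0` and `a/0 = ∞` for `a ≠ 0`, matching the paper's conventions; for
`0 < s < 1` the supremum is empty, hence `0`.) -/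
def flatSemi (s : ℝ) (Ω : Set E) (F : E → ℝ) : ℝ≥0∞ :=
  ⨆ (m : ℕ) (_ : 1 ≤ m) (_ : m ≤ lowFloor s) (x : E) (_ : x ∈ Ω),
    ((‖iteratedFDerivWithin ℝ m F Ω x‖₊ : ℝ≥0∞) ^ s
      / ENNReal.ofReal (F x) ^ (s - (m : ℝ))) ^ (1 / (m : ℝ))

/-- Membership in the cone `F^s(Ω)`. -/
def MemFs (s : ℝ) (Ω : Set E) (F : E → ℝ) : Prop :=
  MemCs s Ω F ∧ (∀ x ∈ Ω, 0 ≤ F x) ∧ flatSemi s Ω F ≠ ∞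

/-- The norm `‖F‖_{F^s(Ω)} = ‖F‖_{C^s(Ω)} + ‖F‖_{Ḟ^s(Ω)}`. -/
def fsNorm (s : ℝ) (Ω : Set E) (F : E → ℝ) : ℝ≥0∞ :=
  csNorm s Ω F + flatSemi s Ω F

/-- `sup_{x ∈ Ω} |F(x)|`, valued in `ℝ≥0∞`. -/
def supNormSet (Ω : Set E) (F : E → ℝ) : ℝ≥0∞ :=
  ⨆ (x : E) (_ : x ∈ Ω), (‖F x‖₊ : ℝ≥0∞)

/-- `P` is (the function given by) a polynomial of degree at most `D`. -/
def IsPolyDeg (D : ℕ) (P : E → ℝ) : Prop :=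
  ContDiff ℝ (⊤ : ℕ∞) P ∧ ∀ x, iteratedFDeriv ℝ (D + 1) P x = 0

/-- The degree-`D` Taylor polynomial (jet) of `F` at `x`, as a function. -/
def jetAt (D : ℕ) (F : E → ℝ) (x : E) : E → ℝ :=
  fun y => ∑ m ∈ Finset.range (D + 1),
    (iteratedFDeriv ℝ m F x fun _ => y - x) / m.factorial

/-- The degree-`D` Taylor polynomial of `F` at `x` using derivatives within `Ω`. -/
def jetWithinAt (D : ℕ) (F : E → ℝ) (Ω : Set E) (x : E) : E → ℝ :=
  fun y => ∑ m ∈ Finset.range (D + 1),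
    (iteratedFDerivWithin ℝ m F Ω x fun _ => y - x) / m.factorial

/-- The pointwise flatness quantity `max_{1≤m<s} (|∇^m P(x)|^s / P(x)^{s-m})^{1/m}`. -/
def jetFlatAt (s : ℝ) (P : E → ℝ) (x : E) : ℝ≥0∞ :=
  ⨆ (m : ℕ) (_ : 1 ≤ m) (_ : m ≤ lowFloor s),
    ((‖iteratedFDeriv ℝ m P x‖₊ : ℝ≥0∞) ^ s
      / ENNReal.ofReal (P x) ^ (s - (m : ℝ))) ^ (1 / (m : ℝ))

/-- The set `Γ(x₀, M)` of flat nonnegative jets. -/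
def Gamma (s : ℝ) (x₀ : E) (M : ℝ) : Set (E → ℝ) :=
  {P | IsPolyDeg (lowFloor s) P ∧ 0 ≤ P x₀ ∧
    (∀ m ≤ lowFloor s, ‖iteratedFDeriv ℝ m P x₀‖ ≤ M) ∧
    jetFlatAt s P x₀ ≤ ENNReal.ofReal M}

/-- `‖P⃗‖_{J C^s(E)}` for a family of jets `P : E → (E → ℝ)`. -/
def jetCNorm (s : ℝ) (Eset : Set E) (P : E → E → ℝ) : ℝ≥0∞ :=
  (⨆ (x : E) (_ : x ∈ Eset) (m : ℕ) (_ : m ≤ lowFloor s),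
      (‖iteratedFDeriv ℝ m (P x) x‖₊ : ℝ≥0∞))
  + ⨆ (x : E) (_ : x ∈ Eset) (y : E) (_ : y ∈ Eset) (_ : x ≠ y)
      (m : ℕ) (_ : m ≤ lowFloor s),
      (‖iteratedFDeriv ℝ m (P x - P y) y‖₊ : ℝ≥0∞)
        / ENNReal.ofReal (‖x - y‖ ^ (s - (m : ℝ)))

/-- `‖P⃗‖_{J Ḟ^s(E)}` for a family of jets. -/
def jetFlatNorm (s : ℝ) (Eset : Set E) (P : E → E → ℝ) : ℝ≥0∞ :=
  ⨆ (x : E) (_ : x ∈ Eset) (m : ℕ) (_ : 1 ≤ m) (_ : m ≤ lowFloor s),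
    ((‖iteratedFDeriv ℝ m (P x) x‖₊ : ℝ≥0∞) ^ s
      / ENNReal.ofReal |P x x| ^ (s - (m : ℝ))) ^ (1 / (m : ℝ))

/-- `‖P⃗‖_{J F^s(E)}`. -/
def jetFsNorm (s : ℝ) (Eset : Set E) (P : E → E → ℝ) : ℝ≥0∞ :=
  jetCNorm s Eset P + jetFlatNorm s Eset P

/-- The trace norm `‖f‖_{F^s(S)}` (with `inf ∅ = ∞`). -/
def traceNorm (s : ℝ) (S : Set E) (f : E → ℝ) : ℝ≥0∞ :=
  ⨅ (F : E → ℝ) (_ : MemFs s (univ : Set E) F ∧ ∀ x ∈ S, F x = f x),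
    fsNorm s (univ : Set E) F


theorem lowFloor_lt {s : ℝ} (hs : 0 < s) : (lowFloor s : ℝ) < s := by
  have h1 : 1 ≤ ⌈s⌉₊ := Nat.one_le_iff_ne_zero.2 (Nat.ceil_pos.2 hs).ne'
  have h2 := Nat.ceil_lt_add_one hs.le
  rw [lowFloor, Nat.cast_sub h1]
  push_cast
  linarith

/-- The Hölder bound on the top-order derivative, in real form. -/
theorem norm_sub_le_of_holderSemi_le {s K : ℝ} (hK : 0 ≤ K) {Ω : Set E}
    {F : E → ℝ} (h : holderSemi s Ω F ≤ ENNReal.ofReal K) {x y : E} (hx : x ∈ Ω) (hy : y ∈ Ω) :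
    ‖iteratedFDerivWithin ℝ (lowFloor s) F Ω x - iteratedFDerivWithin ℝ (lowFloor s) F Ω y‖ ≤
      K * ‖x - y‖ ^ (s - (lowFloor s : ℝ)) := by
  rcases eq_or_ne x y with rfl | hxy
  · simp only [sub_self, norm_zero]
    positivity
  have hpos : 0 < ‖x - y‖ ^ (s - (lowFloor s : ℝ)) :=
    Real.rpow_pos_of_pos (norm_pos_iff.2 (sub_ne_zero.2 hxy)) _
  have h1 := (le_iSup₂_of_le x hx <| le_iSup₂_of_le y hy <|
    le_iSup_of_le hxy le_rfl : _ ≤ holderSemi s Ω F).trans h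
  rw [ENNReal.div_le_iff (by simpa using hpos) ENNReal.ofReal_ne_top,
    ← ENNReal.ofReal_mul hK, ← enorm_eq_nnnorm, ← ofReal_norm] at h1
  exact (ENNReal.ofReal_le_ofReal_iff (by positivity)).1 h1

/-- The flatness bound on the intermediate derivatives, in real form. -/
theorem norm_iteratedFDerivWithin_le_of_flatSemi_le {s K : ℝ} (hs : 0 < s) (hK : 0 ≤ K)
    {Ω : Set E} {F : E → ℝ} (h : flatSemi s Ω F ≤ ENNReal.ofReal K) {x : E} (hx : x ∈ Ω)
    (hF : 0 < F x) {m : ℕ} (hm : 1 ≤ m) (hms : m ≤ lowFloor s) :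
    ‖iteratedFDerivWithin ℝ m F Ω x‖ ≤ K ^ ((m : ℝ) / s) * F x ^ ((s - (m : ℝ)) / s) := by
  have hm0 : (0 : ℝ) < m := by exact_mod_cast hm
  have h1 := (le_iSup₂_of_le m hm <| le_iSup₂_of_le hms x <|
    le_iSup_of_le hx le_rfl : _ ≤ flatSemi s Ω F).trans h
  have hpos : 0 < F x ^ (s - (m : ℝ)) := Real.rpow_pos_of_pos hF _
  rw [one_div, ENNReal.rpow_inv_le_iff hm0, ENNReal.ofReal_rpow_of_pos hF,
    ENNReal.div_le_iff (by simpa using hpos) ENNReal.ofReal_ne_top,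
    ENNReal.ofReal_rpow_of_nonneg hK hm0.le, ← ENNReal.ofReal_mul (by positivity),
    ← enorm_eq_nnnorm, ← ofReal_norm, ENNReal.ofReal_rpow_of_nonneg (norm_nonneg _) hs.le,
    ENNReal.ofReal_le_ofReal_iff (by positivity)] at h1
  rw [div_eq_mul_inv, div_eq_mul_inv, Real.rpow_mul hK, Real.rpow_mul hF.le,
    ← Real.mul_rpow (by positivity) hpos.le]
  exact (Real.le_rpow_inv_iff_of_pos (norm_nonneg _) (by positivity) hs).2 h1

/-- If the derivative of order `k` oscillates by at most `η A / r ^ k` on a small ball and the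
intermediate derivatives at the centre satisfy the scale-`r` bounds `A / r ^ m`, then all lower
derivatives oscillate by at most `η A / r ^ m`. -/
theorem norm_iteratedFDerivWithin_sub_le_of_top {k : ℕ} {Ω : Set E} (hΩ : Convex ℝ Ω)
    (hΩo : IsOpen Ω) {F : E → ℝ} (hF : ContDiffOn ℝ k F Ω) {x₀ : E} (hx₀ : x₀ ∈ Ω)
    {A r c η : ℝ} (hA : 0 < A) (hr : 0 < r) (hc : 0 < c) (hη1 : η ≤ 1) (hcη : 2 * c ≤ η)
    (hflat : ∀ m, 1 ≤ m → m ≤ k → ‖iteratedFDerivWithin ℝ m F Ω x₀‖ ≤ A / r ^ m)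
    (htop : ∀ x ∈ Ω ∩ Metric.ball x₀ (c * r),
      ‖iteratedFDerivWithin ℝ k F Ω x - iteratedFDerivWithin ℝ k F Ω x₀‖ ≤ η * (A / r ^ k))
    {m : ℕ} (hm : m ≤ k) :
    ∀ x ∈ Ω ∩ Metric.ball x₀ (c * r),
      ‖iteratedFDerivWithin ℝ m F Ω x - iteratedFDerivWithin ℝ m F Ω x₀‖ ≤ η * (A / r ^ m) := by
  induction hm using Nat.decreasingInduction with
  | self => exact htop
  | of_succ m hm ih =>
    intro x hx
    have hx₀' : x₀ ∈ Ω ∩ Metric.ball x₀ (c * r) :=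
      ⟨hx₀, Metric.mem_ball_self (mul_pos hc hr)⟩
    have hdiff := hF.differentiableOn_iteratedFDerivWithin (m := m) (by exact_mod_cast hm)
      hΩo.uniqueDiffOn
    have hbound : ∀ y ∈ Ω ∩ Metric.ball x₀ (c * r),
        ‖fderivWithin ℝ (iteratedFDerivWithin ℝ m F Ω) Ω y‖ ≤ 2 * (A / r ^ (m + 1)) := by
      intro y hy
      rw [norm_fderivWithin_iteratedFDerivWithin]
      have h1 := norm_le_norm_add_norm_sub' (iteratedFDerivWithin ℝ (m + 1) F Ω y)
        (iteratedFDerivWithin ℝ (m + 1) F Ω x₀)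
      have h2 := hflat (m + 1) (by lia) hm
      have h3 := ih y hy
      have h4 : η * (A / r ^ (m + 1)) ≤ 1 * (A / r ^ (m + 1)) := by gcongr
      linarith
    have hmv := (hΩ.inter (convex_ball x₀ (c * r))).norm_image_sub_le_of_norm_hasFDerivWithin_le
      (fun y hy => (hdiff y hy.1).hasFDerivWithinAt.mono inter_subset_left) hbound hx₀' hx
    have hdist : ‖x - x₀‖ ≤ c * r := (mem_ball_iff_norm.1 hx.2).le
    calc _ ≤ 2 * (A / r ^ (m + 1)) * ‖x - x₀‖ := hmv
      _ ≤ 2 * (A / r ^ (m + 1)) * (c * r) := by gcongr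
      _ = 2 * c * (A / r ^ m) := by rw [pow_succ]; field_simp
      _ ≤ η * (A / r ^ m) := by gcongr

/-- At the natural length scale `r = (A / K) ^ (1 / s)`, one has
`K ^ (m / s) * A ^ ((s - m) / s) = A / r ^ m`. -/
theorem rpow_mul_rpow_eq_div_scale_pow {s A K : ℝ} (hs : 0 < s) (hA : 0 < A) (hK : 0 < K)
    (m : ℕ) :
    K ^ ((m : ℝ) / s) * A ^ ((s - (m : ℝ)) / s) = A / ((A / K) ^ (1 / s)) ^ m := by
  rw [← Real.rpow_natCast, ← Real.rpow_mul (by positivity), one_div_mul_eq_div,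
    Real.div_rpow hA.le hK.le, sub_div, div_self hs.ne', Real.rpow_sub hA, Real.rpow_one]
  field_simp

/-- Lemma `locally constant`(B): given `ε > 0` there is
`c₀ = c₀(ε,n,s) > 0` such that for any `0 < c ≤ c₀`, convex open `Ω`, `x₀ ∈ Ω`,
and `F ∈ F^s(Ω)` with `K := ‖F‖_{Ċ^s(Ω)} + ‖F‖_{Ḟ^s(Ω)} > 0`:
for `x ∈ Ω` with `|x − x₀| < c (F(x₀)/K)^{1/s}` and `0 ≤ m < s`,
`|∇^m F(x) − ∇^m F(x₀)| ≤ ε K^{m/s} F(x₀)^{(s−m)/s}`; in particular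
`|F(x) − F(x₀)| ≤ ε F(x₀)`. -/
theorem statement7 (ε : ℝ) (hε : 0 < ε) (n : ℕ) (hn : 1 ≤ n) (s : ℝ) (hs : 0 < s) :
    ∃ c₀ : ℝ, 0 < c₀ ∧
      ∀ c : ℝ, 0 < c → c ≤ c₀ →
      ∀ (Ω : Set (EuclideanSpace ℝ (Fin n))), Convex ℝ Ω → IsOpen Ω →
      ∀ x₀ ∈ Ω, ∀ F : EuclideanSpace ℝ (Fin n) → ℝ, MemFs s Ω F →
        0 < holderSemi s Ω F + flatSemi s Ω F →
      ∀ x ∈ Ω,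
        ‖x - x₀‖ <
          c * (F x₀ / (holderSemi s Ω F + flatSemi s Ω F).toReal) ^ (1 / s) →
        (∀ m ≤ lowFloor s,
          ‖iteratedFDerivWithin ℝ m F Ω x - iteratedFDerivWithin ℝ m F Ω x₀‖ ≤
            ε * ((holderSemi s Ω F + flatSemi s Ω F).toReal) ^ ((m : ℝ) / s)
              * (F x₀) ^ ((s - (m : ℝ)) / s)) ∧
        |F x - F x₀| ≤ ε * F x₀ := by
  have hθ : 0 < s - (lowFloor s : ℝ) := sub_pos.2 (lowFloor_lt hs)
  set θ := s - (lowFloor s : ℝ) with hθdef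
  set η := min ε 1
  have hη0 : 0 < η := lt_min hε one_pos
  refine ⟨min (η / 2) (η ^ θ⁻¹), by positivity, ?_⟩
  intro c hc hcc Ω hΩ hΩo x₀ hx₀ F hF hK0 x hx hxx
  obtain ⟨⟨hCD, hcs⟩, hnn, hfl⟩ := hF
  have htop : holderSemi s Ω F + flatSemi s Ω F ≠ ∞ :=
    ENNReal.add_ne_top.2 ⟨(ENNReal.add_ne_top.1 hcs).2, hfl⟩
  have hK : 0 < (holderSemi s Ω F + flatSemi s Ω F).toReal := ENNReal.toReal_pos hK0.ne' htop
  have hKe := ENNReal.ofReal_toReal htop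
  set K := (holderSemi s Ω F + flatSemi s Ω F).toReal
  have hA : 0 < F x₀ := by
    refine (hnn x₀ hx₀).lt_of_ne' fun h => ?_
    rw [h, zero_div, Real.zero_rpow (by positivity), mul_zero] at hxx
    exact (norm_nonneg _).not_gt hxx
  have hcη : c ^ θ ≤ η :=
    (Real.le_rpow_inv_iff_of_pos hc.le hη0.le hθ).1 (hcc.trans (min_le_right _ _))
  have hc2 : 2 * c ≤ η := by
    have := hcc.trans (min_le_left _ _)
    linarith
  have hscale := rpow_mul_rpow_eq_div_scale_pow hs hA hK
  have hr : 0 < (F x₀ / K) ^ (1 / s) := by positivity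
  have hrs : ((F x₀ / K) ^ (1 / s)) ^ s = F x₀ / K := by
    rw [one_div, Real.rpow_inv_rpow (by positivity) hs.ne']
  set r := (F x₀ / K) ^ (1 / s)
  have hmain : ∀ m ≤ lowFloor s,
      ‖iteratedFDerivWithin ℝ m F Ω x - iteratedFDerivWithin ℝ m F Ω x₀‖ ≤
        ε * K ^ ((m : ℝ) / s) * (F x₀) ^ ((s - (m : ℝ)) / s) := by
    intro m hm
    rw [mul_assoc, hscale]
    refine (norm_iteratedFDerivWithin_sub_le_of_top hΩ hΩo hCD hx₀ hA hr hc (min_le_right _ _)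
      hc2 ?_ ?_ hm x ⟨hx, mem_ball_iff_norm.2 hxx⟩).trans ?_
    · intro j hj hjs
      rw [← hscale]
      exact norm_iteratedFDerivWithin_le_of_flatSemi_le hs hK.le (hKe ▸ le_add_self) hx₀ hA hj hjs
    · intro y hy
      have hdist : ‖y - x₀‖ ≤ c * r := (mem_ball_iff_norm.1 hy.2).le
      calc _ ≤ K * ‖y - x₀‖ ^ θ :=
            norm_sub_le_of_holderSemi_le hK.le (hKe ▸ le_self_add) hy.1 hx₀
        _ ≤ K * (c * r) ^ θ := by gcongr
        _ = c ^ θ * (F x₀ / r ^ lowFloor s) := by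
            rw [Real.mul_rpow hc.le hr.le, hθdef, Real.rpow_sub hr, hrs, Real.rpow_natCast]
            field_simp
        _ ≤ η * (F x₀ / r ^ lowFloor s) := by gcongr
    · gcongr
      exact min_le_left _ _
  refine ⟨hmain, ?_⟩
  have h0 := hmain 0 (Nat.zero_le _)
  rw [Nat.cast_zero, zero_div, Real.rpow_zero, sub_zero, div_self hs.ne', Real.rpow_one,
    mul_one] at h0
  refine le_trans ?_ h0
  have := (iteratedFDerivWithin ℝ 0 F Ω x - iteratedFDerivWithin ℝ 0 F Ω x₀).le_opNorm 0
  simpa using this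

end
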